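/- Let n ≥ 1, s ∈ (0,1), and let Ω ⊂ ℝⁿ be a bounded C² domain that is strictly star-shaped with respect to the origin. Let u ∈ C²(Ω) ∩ C¹(cl Ω) ∩ C^{0,1}(ℝⁿ) with u = 0 in Ωᶜ satisfy condition (★), and let 𝔤 = (−Δ)^{s/2}u. Define Φ(λ) = ∫_{ℝⁿ} 𝔤(λx) 𝔤(x/λ) dx. Then the one-sided derivative of Φ at λ = 1 vanishes: lim_{λ→1⁺} (Φ(λ) − Φ(1))/(λ − 1) = 0. -/

import Mathlib

open MeasureTheory Real Set Metric Bornology Filter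
open scoped RealInnerProductSpace ENNReal NNReal Pointwise

noncomputable section

abbrev En (n : ℕ) : Type := EuclideanSpace ℝ (Fin n)

/-- The normalizing constant `c_{n,s}`. -/
def cK (n : ℕ) (s : ℝ) : ℝ :=
  s * (2 : ℝ) ^ (2 * s) * Real.Gamma (((n : ℝ) + 2 * s) / 2) /
    (Real.pi ^ ((n : ℝ) / 2) * Real.Gamma (1 - s))

/-- The fractional Laplacian `(-Δ)ˢ u (x)`. -/
def fracLap (n : ℕ) (s : ℝ) (u : En n → ℝ) (x : En n) : ℝ :=
  (cK n s / 2) * ∫ y : En n, (2 * u x - u (x + y) - u (x - y)) / ‖y‖ ^ ((n : ℝ) + 2 * s)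

/-- `(-Δ)^{s/2} u (x)`, defined via the non-symmetrized integral. -/
def fracHalf (n : ℕ) (s : ℝ) (u : En n → ℝ) (x : En n) : ℝ :=
  cK n (s / 2) * ∫ z : En n, (u x - u (x + z)) / ‖z‖ ^ ((n : ℝ) + s)

/-- The squared Gagliardo-type seminorm `[u]_s²`. -/
def seminormSsq (n : ℕ) (s : ℝ) (u : En n → ℝ) : ℝ :=
  (cK n s / 2) * ∫ p : En n × En n, (u p.1 - u p.2) ^ 2 / ‖p.1 - p.2‖ ^ ((n : ℝ) + 2 * s)

/-- The squared seminorm `[u]₁² = ∫_Ω |∇u|²`. -/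
def seminorm1sq (n : ℕ) (Ω : Set (En n)) (u : En n → ℝ) : ℝ :=
  ∫ x in Ω, ‖gradient u x‖ ^ 2

/-- The Laplacian as the trace of the Hessian. -/
def lap (n : ℕ) (u : En n → ℝ) (x : En n) : ℝ :=
  ∑ i : Fin n, fderiv ℝ (fun y => fderiv ℝ u y (EuclideanSpace.single i 1)) x
    (EuclideanSpace.single i 1)

/-- The Hessian `D²u(x)` as a continuous bilinear-type map; `‖hess n u x‖` is its operator
norm. -/
def hess (n : ℕ) (u : En n → ℝ) (x : En n) : En n →L[ℝ] En n →L[ℝ] ℝ :=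
  fderiv ℝ (fderiv ℝ u) x

/-- A bounded C² domain `Ω ⊆ ℝⁿ`: a bounded open connected set whose boundary is a C²
hypersurface, described by a global C² defining function with nonvanishing gradient
on the boundary. -/
structure C2Domain (n : ℕ) where
  carrier : Set (En n)
  phi : En n → ℝ
  phi_smooth : ContDiff ℝ 2 phi
  carrier_eq : carrier = {x | phi x < 0}
  grad_ne : ∀ x ∈ frontier carrier, gradient phi x ≠ 0
  bounded : IsBounded carrier
  connected : IsConnected carrier

/-- The outward unit normal `ν` on `∂Ω`. -/
def C2Domain.nu {n : ℕ} (D : C2Domain n) (x : En n) : En n :=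
  ‖gradient D.phi x‖⁻¹ • gradient D.phi x

/-- The normal derivative `∂u/∂ν` at a boundary point (the derivative from inside). -/
def normalDeriv {n : ℕ} (D : C2Domain n) (u : En n → ℝ) (x : En n) : ℝ :=
  fderivWithin ℝ u (closure D.carrier) x (D.nu x)

/-- `Ω` is strictly star-shaped with respect to `z₀`. -/
def C2Domain.StrictlyStarShapedAt {n : ℕ} (D : C2Domain n) (z₀ : En n) : Prop :=
  z₀ ∈ D.carrier ∧ ∀ x ∈ frontier D.carrier, 0 < ⟪x - z₀, D.nu x⟫

/-- `Ω` is strictly star-shaped. -/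
def C2Domain.StrictlyStarShaped {n : ℕ} (D : C2Domain n) : Prop :=
  ∃ z₀, D.StrictlyStarShapedAt z₀

/-- The Pohozaev boundary term `∫_{∂Ω} (∂u/∂ν)² (x·ν(x)) dS`, with `dS` the
`(n-1)`-dimensional Hausdorff measure on `∂Ω`. -/
def pohozaevBoundary {n : ℕ} (D : C2Domain n) (u : En n → ℝ) : ℝ :=
  ∫ x in frontier D.carrier, (normalDeriv D u x) ^ 2 * ⟪x, D.nu x⟫ ∂ μH[(n : ℝ) - 1]

/-- Condition (★). -/
def StarCond (n : ℕ) (s : ℝ) (Ω : Set (En n)) (u : En n → ℝ) : Prop :=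
  ∃ C > 0, ∃ γ ∈ Set.Ioo (0:ℝ) 1, ∀ x ∈ Ω,
    ‖hess n u x‖ ≤ C * infDist x (frontier Ω) ^ (γ - 1) ∧
    |u x| ≤ C * infDist x (frontier Ω) ∧
    |fracLap n s u x| ≤ C * (1 + (if s < 1/2 then 1 else 0)
      + (if s = 1/2 then |Real.log (infDist x (frontier Ω))| else 0)
      + (if 1/2 < s then infDist x (frontier Ω) ^ (1 - 2*s) else 0))

open Asymptotics
open Module (finrank)
open scoped Topology

/-!
Write `g = (-Δ)^{s/2} u` and `κ = λ²`. Since `λⁿ g(κ ·)` has the same `L²` norm as `g`,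
polarization gives `Φ(λ) - Φ(1) = -½ ‖λⁿ g(κ ·) - g‖²`. Up to an error `O(λ - 1)` in `L²`, the
difference on the right is `(-Δ)^{s/2} v` with `v = u(κ ·) - u`. Put `t = κ - 1`. By
star-shapedness `v` is supported in `Ω`, where it is `O(t)`; it is Lipschitz uniformly in `κ`; and
its gradient is `O(t)` in `L¹`, because (★) makes `D²u` integrable and the boundary layer in which
the dilation crosses `∂Ω` has volume `O(t)`. Interpolating, `‖v - v(· + z)‖₂ ≤ C √t min(|z|, √t)`,
and Minkowski's integral inequality turns this into `‖(-Δ)^{s/2} v‖₂² = O(t^{2-s}) = o(t)`.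
-/

section StarConvex

variable {E : Type*} [NormedAddCommGroup E] [NormedSpace ℝ E]

lemma exists_last_nonneg {f : ℝ → ℝ} {a b t : ℝ} (hf : ContinuousOn f (Icc a b))
    (ht : t ∈ Icc a b) (hft : 0 ≤ f t) (hfb : f b < 0) :
    ∃ σ ∈ Ico a b, 0 ≤ f σ ∧ ∀ r ∈ Ioc σ b, f r < 0 := by
  have hcpt : IsCompact (Icc a b ∩ f ⁻¹' Ici 0) :=
    isCompact_Icc.of_isClosed_subset (hf.preimage_isClosed_of_isClosed isClosed_Icc isClosed_Ici)
      inter_subset_left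
  obtain ⟨σ, ⟨hσ, hfσ⟩, hmax⟩ := hcpt.exists_isGreatest ⟨t, ht, hft⟩
  have hσb : σ ≠ b := by
    rintro rfl
    exact hfb.not_ge hfσ
  refine ⟨σ, ⟨hσ.1, hσ.2.lt_of_ne hσb⟩, hfσ, fun r hr => ?_⟩
  by_contra! hfr
  exact (hmax ⟨⟨hσ.1.trans hr.1.le, hr.2⟩, hfr⟩).not_gt hr.1

/-- If a segment from `b` left `{φ < 0}`, then at the last point `z` where `φ ≥ 0` the function
`φ` would be non-increasing in the direction `z - b`. -/
lemma starConvex_setOf_neg_of_fderiv_pos {φ : E → ℝ} {b : E} (hφ : Differentiable ℝ φ)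
    (hb : φ b < 0) (hpos : ∀ x ∈ frontier {x | φ x < 0}, 0 < fderiv ℝ φ x (x - b)) :
    StarConvex ℝ b {x | φ x < 0} := by
  rw [starConvex_iff_segment_subset]
  intro x hx
  rw [segment_eq_image_lineMap]
  rintro _ ⟨t, ht, rfl⟩
  by_contra! hφt
  set p : ℝ →ᵃ[ℝ] E := AffineMap.lineMap b x with hp
  have hpc : Continuous p := AffineMap.lineMap_continuous
  have hp_sub (r σ : ℝ) : p r - p σ = (r - σ) • (x - b) := by
    simp only [hp, AffineMap.lineMap_apply_module']; module
  obtain ⟨σ, hσ, hφσ, hneg⟩ := exists_last_nonneg (f := φ ∘ p)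
    (hφ.continuous.comp hpc).continuousOn ht (not_lt.1 hφt) (by simpa [hp] using hx)
  have hσ0 : 0 < σ := by
    refine hσ.1.lt_of_ne ?_
    rintro rfl
    exact hb.not_ge (by simpa [hp] using hφσ)
  have hfrontier : p σ ∈ frontier {x | φ x < 0} := by
    rw [(isOpen_lt hφ.continuous continuous_const).frontier_eq]
    refine ⟨map_mem_closure hpc ?_ hneg, hφσ.not_gt⟩
    rw [closure_Ioc hσ.2.ne]
    exact left_mem_Icc.2 hσ.2.le
  have hmax : IsLocalMaxOn φ (segment ℝ (p σ) (p 1)) (p σ) := by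
    refine IsMaxOn.localize ?_
    rw [← image_segment, segment_eq_Icc hσ.2.le]
    rintro _ ⟨r, hr, rfl⟩
    change φ (p r) ≤ φ (p σ)
    obtain rfl | hlt := hr.1.eq_or_lt
    · exact le_rfl
    · exact (hneg r ⟨hlt, hr.2⟩).le.trans hφσ
  have hle := hmax.hasFDerivWithinAt_nonpos (hφ (p σ)).hasFDerivAt.hasFDerivWithinAt
    (sub_mem_posTangentConeAt_of_segment_subset Subset.rfl)
  have hgt := hpos _ hfrontier
  have hp0 : p 0 = b := by simp [hp]
  rw [hp_sub, map_smul, smul_eq_mul] at hle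
  rw [← hp0, hp_sub, map_smul, smul_eq_mul] at hgt
  nlinarith [hσ.2]

lemma eventually_starConvex_setOf_neg {φ : E → ℝ} {b : E} (hφ : ContDiff ℝ 1 φ)
    (hcpt : IsCompact (frontier {x | φ x < 0})) (hb : φ b < 0)
    (hpos : ∀ x ∈ frontier {x | φ x < 0}, 0 < fderiv ℝ φ x (x - b)) :
    ∀ᶠ b' in nhds b, StarConvex ℝ b' {x | φ x < 0} := by
  have hfderiv : Continuous (fderiv ℝ φ) := hφ.continuous_fderiv one_ne_zero
  have hnear : ∀ᶠ b' in nhds b, ∀ x ∈ frontier {x | φ x < 0}, 0 < fderiv ℝ φ x (x - b') :=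
    hcpt.eventually_forall_of_forall_eventually fun x hx =>
      (isOpen_lt continuous_const ((hfderiv.comp continuous_snd).clm_apply
        (continuous_snd.sub continuous_fst))).mem_nhds (hpos x hx)
  filter_upwards [hnear, (isOpen_lt hφ.continuous continuous_const).mem_nhds hb] with b' hb' hφb'
  exact starConvex_setOf_neg_of_fderiv_pos (hφ.differentiable one_ne_zero) hφb' hb'

/-- `Ω` is star-shaped with respect to every point of the closed ball of radius `ρ` around `0`;
a quantitative form of strict star-shapedness. -/
def StarConvexBall (ρ : ℝ) (Ω : Set E) : Prop :=
  ∀ b ∈ closedBall (0 : E) ρ, StarConvex ℝ b Ω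

/-- Strict star-shapedness with respect to `0`: the half-open segment from `0` to any point of the
closure lies in `Ω`. -/
def StrictStarConvex (Ω : Set E) : Prop :=
  ∀ x ∈ closure Ω, ∀ τ ∈ Ico (0 : ℝ) 1, τ • x ∈ Ω

namespace StarConvexBall

variable {Ω : Set E} {ρ τ : ℝ} {x : E}

lemma closedBall_subset (h : StarConvexBall ρ Ω) (hx : x ∈ Ω) (hτ : τ ∈ Ico (0 : ℝ) 1) :
    closedBall (τ • x) ((1 - τ) * ρ) ⊆ Ω := by
  intro y hy
  have h1 : 0 < 1 - τ := sub_pos.2 hτ.2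
  have hb : (1 - τ)⁻¹ • (y - τ • x) ∈ closedBall (0 : E) ρ := by
    rw [mem_closedBall_zero_iff, norm_smul, norm_of_nonneg (inv_pos.2 h1).le,
      inv_mul_le_iff₀ h1, ← dist_eq_norm]
    exact hy
  have hmem := h _ hb hx h1.le hτ.1 (sub_add_cancel 1 τ)
  rwa [smul_inv_smul₀ h1.ne', sub_add_cancel] at hmem

lemma strictStarConvex (h : StarConvexBall ρ Ω) (hρ : 0 < ρ) : StrictStarConvex Ω := by
  intro x hx τ hτ
  have hr : 0 < (1 - τ) * ρ := mul_pos (sub_pos.2 hτ.2) hρ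
  obtain ⟨y, hy, hxy⟩ := Metric.mem_closure_iff.1 hx _ hr
  refine h.closedBall_subset hy hτ ?_
  rw [mem_closedBall, dist_smul₀, norm_of_nonneg hτ.1]
  exact (mul_le_of_le_one_left dist_nonneg hτ.2.le).trans hxy.le

lemma le_infDist_frontier (h : StarConvexBall ρ Ω) (hΩ : IsOpen Ω) (hne : (frontier Ω).Nonempty)
    (hx : x ∈ Ω) (hτ : τ ∈ Ico (0 : ℝ) 1) : (1 - τ) * ρ ≤ infDist (τ • x) (frontier Ω) := by
  refine (le_infDist hne).2 fun y hy => ?_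
  by_contra! hlt
  rw [hΩ.frontier_eq] at hy
  exact hy.2 (h.closedBall_subset hx hτ (mem_closedBall'.2 hlt.le))

end StarConvexBall

end StarConvex

namespace C2Domain

variable {n : ℕ} (D : C2Domain n)

lemma isOpen_carrier : IsOpen D.carrier := by
  rw [D.carrier_eq]
  exact isOpen_lt D.phi_smooth.continuous continuous_const

lemma nonempty_frontier (hn : 1 ≤ n) : (frontier D.carrier).Nonempty := by
  refine nonempty_frontier_iff.2 ⟨D.connected.nonempty, fun huniv => ?_⟩
  have : Nonempty (Fin n) := ⟨⟨0, hn⟩⟩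
  exact NormedSpace.unbounded_univ ℝ (En n) (huniv ▸ D.bounded)

variable {D} in
lemma StrictlyStarShapedAt.fderiv_phi_pos {z₀ x : En n} (h : D.StrictlyStarShapedAt z₀)
    (hx : x ∈ frontier D.carrier) : 0 < fderiv ℝ D.phi x (x - z₀) := by
  have hinner := h.2 x hx
  rw [nu, inner_smul_right, real_inner_comm, inner_gradient_left] at hinner
  exact pos_of_mul_pos_right hinner (inv_nonneg.2 (norm_nonneg _))

variable {D} in
lemma StrictlyStarShapedAt.exists_starConvexBall (h : D.StrictlyStarShapedAt 0) :
    ∃ ρ > 0, StarConvexBall ρ D.carrier := by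
  have hcpt : IsCompact (frontier D.carrier) :=
    isCompact_of_isClosed_isBounded isClosed_frontier
      (D.bounded.closure.subset frontier_subset_closure)
  have hpos := fun x hx => h.fderiv_phi_pos (x := x) hx
  have h0 := h.1
  simp only [StarConvexBall]
  rw [D.carrier_eq] at hcpt hpos h0 ⊢
  exact nhds_basis_closedBall.eventually_iff.1
    (eventually_starConvex_setOf_neg (D.phi_smooth.of_le one_le_two) hcpt h0 hpos)

end C2Domain

section Dilation

variable {E : Type*} [NormedAddCommGroup E] [NormedSpace ℝ E] [MeasurableSpace E] [BorelSpace E]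
  [FiniteDimensional ℝ E] (μ : Measure E) [μ.IsAddHaarMeasure]

/-- Bernoulli's inequality bounds the relative volume loss `1 - a ^ d` by `d * (1 - a)`. -/
lemma measure_sdiff_smul_le {Ω : Set E} (hΩ : MeasurableSet Ω) (hfin : μ Ω ≠ ∞) {a : ℝ}
    (ha : a ∈ Ioc 0 1) (hsub : a • Ω ⊆ Ω) :
    μ (Ω \ a • Ω) ≤ ENNReal.ofReal (finrank ℝ E * (1 - a)) * μ Ω := by
  set d := finrank ℝ E
  have hbern : 1 ≤ d * (1 - a) + a ^ d := by
    have := one_add_mul_le_pow (a := a - 1) (by linarith [ha.1]) d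
    rw [add_sub_cancel] at this
    linarith
  rw [measure_sdiff hsub (hΩ.const_smul_of_ne_zero ha.1.ne').nullMeasurableSet
    (measure_ne_top_of_subset hsub hfin), Measure.addHaar_smul_of_nonneg μ ha.1.le,
    tsub_le_iff_right, ← add_mul,
    ← ENNReal.ofReal_add (mul_nonneg d.cast_nonneg (sub_nonneg.2 ha.2)) (pow_nonneg ha.1.le d)]
  exact le_mul_of_one_le_left' (ENNReal.one_le_ofReal.2 hbern)

lemma lintegral_comp_smul (f : E → ℝ≥0∞) {r : ℝ} (hr : 0 < r) :
    ∫⁻ x, f (r • x) ∂μ = ENNReal.ofReal (r ^ finrank ℝ E)⁻¹ * ∫⁻ x, f x ∂μ := by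
  have hmap := lintegral_map_equiv (μ := μ) f (MeasurableEquiv.smul₀ r hr.ne')
  rwa [MeasurableEquiv.coe_smul₀, Measure.map_addHaar_smul μ hr.ne', lintegral_smul_measure,
    smul_eq_mul, abs_of_pos (by positivity), eq_comm] at hmap

lemma lintegral_comp_smul_le (f : E → ℝ≥0∞) {r : ℝ} (hr : 1 ≤ r) :
    ∫⁻ x, f (r • x) ∂μ ≤ ∫⁻ x, f x ∂μ := by
  rw [lintegral_comp_smul μ f (zero_lt_one.trans_le hr)]
  exact mul_le_of_le_one_left'
    (ENNReal.ofReal_le_one.2 (inv_le_one_of_one_le₀ (one_le_pow₀ hr)))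

end Dilation

lemma lintegral_rpow_neg_lt_top {α : Type*} [MeasurableSpace α] {μ : Measure α}
    [IsFiniteMeasure μ] {f : α → ℝ} (hf : AEMeasurable f μ) (hf0 : ∀ x, 0 ≤ f x) {A β : ℝ}
    (hA : ∀ r > 0, μ {x | f x < r} ≤ ENNReal.ofReal (A * r)) (hβ : β ∈ Ioo (0 : ℝ) 1) :
    ∫⁻ x, ENNReal.ofReal (f x ^ (-β)) ∂μ < ∞ := by
  have hlevel (t : ℝ) (ht : 0 < t) :
      μ {x | t < f x ^ (-β)} ≤ ENNReal.ofReal (A * t ^ (-β⁻¹)) := by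
    refine (measure_mono fun x (hx : t < f x ^ (-β)) => ?_).trans (hA _ (by positivity))
    have hfx : 0 < f x := (hf0 x).lt_of_ne' fun h => by
      rw [h, zero_rpow (neg_ne_zero.2 hβ.1.ne')] at hx
      exact hx.not_gt ht
    rwa [neg_inv, mem_ofPred_eq, lt_rpow_inv_iff_of_neg hfx ht (neg_neg_of_pos hβ.1)]
  rw [lintegral_eq_lintegral_meas_lt μ (Eventually.of_forall fun x => rpow_nonneg (hf0 x) _)
    (hf.pow_const _), ← Ioc_union_Ioi_eq_Ioi zero_le_one]
  refine (lintegral_union_le _ _ _).trans_lt (ENNReal.add_lt_top.2 ⟨?_, ?_⟩)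
  · calc ∫⁻ t in Ioc 0 1, μ {x | t < f x ^ (-β)} ≤ ∫⁻ _ in Ioc (0 : ℝ) 1, μ univ :=
          lintegral_mono fun _ => measure_mono (subset_univ _)
      _ < ∞ := by simp [measure_lt_top]
  · have hint : IntegrableOn (fun t : ℝ => A * t ^ (-β⁻¹)) (Ioi 1) :=
      (integrableOn_Ioi_rpow_of_lt (neg_lt_neg (one_lt_inv₀ hβ.1 |>.2 hβ.2)) one_pos).const_mul A
    calc ∫⁻ t in Ioi 1, μ {x | t < f x ^ (-β)}
        ≤ ∫⁻ t in Ioi 1, ENNReal.ofReal (A * t ^ (-β⁻¹)) :=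
          setLIntegral_mono' measurableSet_Ioi fun t ht => hlevel t (zero_lt_one.trans ht)
      _ < ∞ := hint.lintegral_lt_top

section BoundaryDistance

variable {E : Type*} [NormedAddCommGroup E] [NormedSpace ℝ E] [MeasurableSpace E] [BorelSpace E]
  [FiniteDimensional ℝ E] [Nontrivial E] (μ : Measure E) [μ.IsAddHaarMeasure]
  {Ω : Set E} {ρ : ℝ}

lemma StarConvexBall.measure_infDist_lt_le (h : StarConvexBall ρ Ω) (hρ : 0 < ρ)
    (hΩ : IsOpen Ω) (hb : IsBounded Ω) (hne : (frontier Ω).Nonempty) {r : ℝ} (hr : 0 < r) :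
    μ {x ∈ Ω | infDist x (frontier Ω) < r} ≤
      ENNReal.ofReal (finrank ℝ E * (r / ρ)) * μ Ω := by
  have hr0 : 0 < r / ρ := by positivity
  obtain hle | hlt := le_or_gt 1 (r / ρ)
  · have hd : (1 : ℝ) ≤ finrank ℝ E := mod_cast Module.finrank_pos
    refine (measure_mono (sep_subset _ _)).trans (le_mul_of_one_le_left' ?_)
    exact ENNReal.one_le_ofReal.2 (one_le_mul_of_one_le_of_one_le hd hle)
  · have ha : 1 - r / ρ ∈ Ioo (0 : ℝ) 1 := ⟨by linarith, by linarith⟩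
    have hsub : (1 - r / ρ) • Ω ⊆ Ω := by
      rintro _ ⟨x, hx, rfl⟩
      exact h.strictStarConvex hρ x (subset_closure hx) _ (Ioo_subset_Ico_self ha)
    have hcollar : {x ∈ Ω | infDist x (frontier Ω) < r} ⊆ Ω \ (1 - r / ρ) • Ω := by
      rintro x ⟨hx, hdist⟩
      refine ⟨hx, ?_⟩
      rintro ⟨y, hy, rfl⟩
      have hle := h.le_infDist_frontier hΩ hne hy (Ioo_subset_Ico_self ha)
      rw [sub_sub_cancel, div_mul_cancel₀ _ hρ.ne'] at hle
      exact hle.not_gt hdist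
    simpa using (measure_mono hcollar).trans (measure_sdiff_smul_le μ hΩ.measurableSet
      hb.measure_lt_top.ne (Ioo_subset_Ioc_self ha) hsub)

lemma StarConvexBall.lintegral_infDist_rpow_neg_lt_top (h : StarConvexBall ρ Ω) (hρ : 0 < ρ)
    (hΩ : IsOpen Ω) (hb : IsBounded Ω) (hne : (frontier Ω).Nonempty) {β : ℝ}
    (hβ : β ∈ Ioo (0 : ℝ) 1) :
    ∫⁻ x in Ω, ENNReal.ofReal (infDist x (frontier Ω) ^ (-β)) ∂μ < ∞ := by
  have : IsFiniteMeasure (μ.restrict Ω) := ⟨by simpa using hb.measure_lt_top⟩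
  refine lintegral_rpow_neg_lt_top (A := finrank ℝ E / ρ * (μ Ω).toReal)
    (by fun_prop) (fun _ => infDist_nonneg) (fun r hr => ?_) hβ
  rw [Measure.restrict_apply (measurableSet_lt (by fun_prop) measurable_const)]
  convert h.measure_infDist_lt_le μ hρ hΩ hb hne hr using 1
  · congr 1; ext; simp [and_comm]
  · rw [← ENNReal.ofReal_toReal hb.measure_lt_top.ne, ← ENNReal.ofReal_mul (by positivity),
      ENNReal.toReal_ofReal ENNReal.toReal_nonneg]
    congr 1; ring

lemma StarConvexBall.integrableOn_of_norm_le {F : Type*} [NormedAddCommGroup F]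
    (h : StarConvexBall ρ Ω) (hρ : 0 < ρ) (hΩ : IsOpen Ω) (hb : IsBounded Ω)
    (hne : (frontier Ω).Nonempty) {f : E → F} (hf : ContinuousOn f Ω) {C γ : ℝ}
    (hγ : γ ∈ Ioo (0 : ℝ) 1) (hle : ∀ x ∈ Ω, ‖f x‖ ≤ C * infDist x (frontier Ω) ^ (γ - 1)) :
    IntegrableOn f Ω μ := by
  have hweight : IntegrableOn (fun x => infDist x (frontier Ω) ^ (γ - 1)) Ω μ := by
    refine ⟨Measurable.aestronglyMeasurable (by fun_prop), ?_⟩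
    rw [hasFiniteIntegral_iff_ofReal (Eventually.of_forall fun x => rpow_nonneg infDist_nonneg _),
      ← neg_sub]
    exact h.lintegral_infDist_rpow_neg_lt_top μ hρ hΩ hb hne
      ⟨by linarith [hγ.2], by linarith [hγ.1]⟩
  exact (hweight.const_mul C).mono' (hf.aestronglyMeasurable hΩ.measurableSet)
    (ae_restrict_of_forall_mem hΩ.measurableSet hle)

end BoundaryDistance

section Minkowski

variable {α β : Type*} [MeasurableSpace α] [MeasurableSpace β] {μ : Measure α} {ν : Measure β}

lemma lintegral_mul_le_eLpNorm_mul_eLpNorm {f g : α → ℝ≥0∞} (hf : AEMeasurable f μ)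
    (hg : AEMeasurable g μ) : ∫⁻ x, f x * g x ∂μ ≤ eLpNorm f 2 μ * eLpNorm g 2 μ := by
  simpa [eLpNorm_eq_lintegral_rpow_enorm_toReal] using
    ENNReal.lintegral_mul_le_Lp_mul_Lq μ Real.HolderConjugate.two_two hf hg

lemma eLpNorm_two_sq {G : Type*} [TopologicalSpace G] [ContinuousENorm G] (f : α → G) :
    eLpNorm f 2 μ ^ 2 = ∫⁻ x, ‖f x‖ₑ ^ 2 ∂μ := by
  simpa using eLpNorm_nnreal_pow_eq_lintegral (f := f) (μ := μ) (p := 2) two_ne_zero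

variable [SFinite μ] [SFinite ν]

/-- Expand the square of the inner integral, exchange the order of integration, and apply the
Cauchy-Schwarz inequality in `x`. -/
lemma eLpNorm_two_lintegral_le {F : α → β → ℝ≥0∞} (hF : Measurable (Function.uncurry F)) :
    eLpNorm (fun x => ∫⁻ z, F x z ∂ν) 2 μ ≤ ∫⁻ z, eLpNorm (F · z) 2 μ ∂ν := by
  have hrow (x : α) : Measurable (F x) := hF.of_uncurry_left
  have hcol (z : β) : Measurable (F · z) := hF.of_uncurry_right
  have hnorm : Measurable fun z => eLpNorm (F · z) 2 μ := by
    simp only [eLpNorm_eq_lintegral_rpow_enorm_toReal two_ne_zero ENNReal.ofNat_ne_top]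
    exact (Measurable.lintegral_prod_left' (hF.enorm.pow_const _)).pow_const _
  have hprod : Measurable fun p : α × β × β => F p.1 p.2.1 * F p.1 p.2.2 :=
    (hF.comp (measurable_fst.prodMk measurable_snd.fst)).mul
      (hF.comp (measurable_fst.prodMk measurable_snd.snd))
  rw [← ENNReal.pow_le_pow_left_iff two_ne_zero, eLpNorm_two_sq]
  calc ∫⁻ x, ‖∫⁻ z, F x z ∂ν‖ₑ ^ 2 ∂μ
      = ∫⁻ x, ∫⁻ p, F x p.1 * F x p.2 ∂ν.prod ν ∂μ := by
        simp_rw [enorm_eq_self, sq,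
          ← lintegral_prod_mul (hrow _).aemeasurable (hrow _).aemeasurable]
    _ = ∫⁻ p, ∫⁻ x, F x p.1 * F x p.2 ∂μ ∂ν.prod ν := lintegral_lintegral_swap hprod.aemeasurable
    _ ≤ ∫⁻ p, eLpNorm (F · p.1) 2 μ * eLpNorm (F · p.2) 2 μ ∂ν.prod ν := lintegral_mono fun p =>
        lintegral_mul_le_eLpNorm_mul_eLpNorm (hcol _).aemeasurable (hcol _).aemeasurable
    _ = (∫⁻ z, eLpNorm (F · z) 2 μ ∂ν) ^ 2 := by
        rw [lintegral_prod_mul hnorm.aemeasurable hnorm.aemeasurable, sq]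

lemma eLpNorm_two_integral_le {F : α → β → ℝ} (hF : Measurable (Function.uncurry F)) :
    eLpNorm (fun x => ∫ z, F x z ∂ν) 2 μ ≤ ∫⁻ z, eLpNorm (F · z) 2 μ ∂ν := by
  calc eLpNorm (fun x => ∫ z, F x z ∂ν) 2 μ
      ≤ eLpNorm (fun x => ∫⁻ z, ‖F x z‖ₑ ∂ν) 2 μ :=
        eLpNorm_mono_enorm fun x => enorm_integral_le_lintegral_enorm _
    _ ≤ ∫⁻ z, eLpNorm (fun x => ‖F x z‖ₑ) 2 μ ∂ν := eLpNorm_two_lintegral_le hF.enorm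
    _ = ∫⁻ z, eLpNorm (F · z) 2 μ ∂ν := by simp only [eLpNorm_enorm]

end Minkowski

section RieszKernel

variable {E : Type*} [NormedAddCommGroup E] [NormedSpace ℝ E] [MeasurableSpace E] [BorelSpace E]
  [FiniteDimensional ℝ E] (μ : Measure E) [μ.IsAddHaarMeasure] {s : ℝ}

lemma integrable_min_norm_one_div_rpow [Nontrivial E] (hs : s ∈ Ioo (0 : ℝ) 1) :
    Integrable (fun z : E => min ‖z‖ 1 / ‖z‖ ^ (finrank ℝ E + s)) μ := by
  rw [integrable_fun_norm_addHaar μ (f := fun r : ℝ => min r 1 / r ^ (finrank ℝ E + s)),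
    ← Ioc_union_Ioi_eq_Ioi zero_le_one, integrableOn_union]
  have hradial {r : ℝ} (hr : 0 < r) :
      r ^ (finrank ℝ E - 1) • (min r 1 / r ^ (finrank ℝ E + s)) = min r 1 * r ^ (-1 - s) := by
    have hd : 1 ≤ finrank ℝ E := Module.finrank_pos
    rw [smul_eq_mul, div_eq_mul_inv, ← rpow_neg hr.le, mul_left_comm, ← rpow_natCast,
      ← rpow_add hr]
    congr 2
    push_cast [hd]
    ring
  constructor
  · have hnear : IntegrableOn (fun r : ℝ => r ^ (-s)) (Ioc 0 1) := by
      rw [← intervalIntegrable_iff_integrableOn_Ioc_of_le zero_le_one]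
      exact intervalIntegral.intervalIntegrable_rpow' (by linarith [hs.2])
    refine hnear.congr_fun (fun r hr => ?_) measurableSet_Ioc
    dsimp only
    rw [hradial hr.1, min_eq_left hr.2, ← rpow_one_add' hr.1.le (by linarith [hs.1])]
    congr 1
    ring
  · have hfar : IntegrableOn (fun r : ℝ => r ^ (-1 - s)) (Ioi 1) :=
      integrableOn_Ioi_rpow_of_lt (by linarith [hs.1]) one_pos
    refine hfar.congr_fun (fun r (hr : 1 < r) => ?_) measurableSet_Ioi
    dsimp only
    rw [hradial (one_pos.trans hr), min_eq_right hr.le, one_mul]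

lemma lintegral_min_norm_div_rpow {r : ℝ} (hr : 0 < r) :
    ∫⁻ z, ENNReal.ofReal (min ‖z‖ r / ‖z‖ ^ (finrank ℝ E + s)) ∂μ =
      ENNReal.ofReal (r ^ (1 - s)) *
        ∫⁻ z, ENNReal.ofReal (min ‖z‖ 1 / ‖z‖ ^ (finrank ℝ E + s)) ∂μ := by
  have hscale (z : E) : min ‖r • z‖ r / ‖r • z‖ ^ (finrank ℝ E + s) =
      r ^ (1 - s) / r ^ finrank ℝ E * (min ‖z‖ 1 / ‖z‖ ^ (finrank ℝ E + s)) := by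
    rw [norm_smul, norm_of_nonneg hr.le, mul_rpow hr.le (norm_nonneg z), rpow_add hr,
      rpow_sub hr, rpow_one, rpow_natCast]
    nth_rw 2 [← mul_one r]
    rw [← mul_min_of_nonneg _ _ hr.le]
    field_simp
  have hint := lintegral_comp_smul μ
    (fun z : E => ENNReal.ofReal (min ‖z‖ r / ‖z‖ ^ (finrank ℝ E + s))) hr
  simp only [hscale, ENNReal.ofReal_mul (by positivity : 0 ≤ r ^ (1 - s) / r ^ finrank ℝ E)] at hint
  rw [lintegral_const_mul' _ _ ENNReal.ofReal_ne_top, div_eq_inv_mul,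
    ENNReal.ofReal_mul (by positivity), mul_assoc] at hint
  exact ((ENNReal.mul_right_inj (ENNReal.ofReal_pos.2 (by positivity)).ne'
    ENNReal.ofReal_ne_top).1 hint).symm

end RieszKernel

section FracHalf

variable {n : ℕ} {s : ℝ} {w : En n → ℝ}

lemma integrable_min_norm_one_div_rpow_euclidean (hn : 1 ≤ n) (hs : s ∈ Ioo (0 : ℝ) 1) :
    Integrable (fun z : En n => min ‖z‖ 1 / ‖z‖ ^ ((n : ℝ) + s)) := by
  have : Nonempty (Fin n) := ⟨⟨0, hn⟩⟩
  simpa using integrable_min_norm_one_div_rpow (volume : Measure (En n)) hs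

lemma stronglyMeasurable_fracHalf (hw : Continuous w) : StronglyMeasurable (fracHalf n s w) := by
  refine StronglyMeasurable.const_mul (StronglyMeasurable.integral_prod_right ?_) _
  exact Measurable.stronglyMeasurable (by unfold Function.uncurry; fun_prop)

lemma integrable_fracHalf_kernel (hn : 1 ≤ n) (hs : s ∈ Ioo (0 : ℝ) 1) {M : ℝ} {L : ℝ≥0}
    (hM : ∀ x, |w x| ≤ M) (hL : LipschitzWith L w) (x : En n) :
    Integrable fun z : En n => (w x - w (x + z)) / ‖z‖ ^ ((n : ℝ) + s) := by
  have hw := hL.continuous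
  refine ((integrable_min_norm_one_div_rpow_euclidean hn hs).const_mul (max L (2 * M))).mono'
    (Measurable.aestronglyMeasurable (by fun_prop)) (Eventually.of_forall fun z => ?_)
  have hnear : |w x - w (x + z)| ≤ L * ‖z‖ := by
    simpa [Real.dist_eq] using hL.dist_le_mul x (x + z)
  have hfar : |w x - w (x + z)| ≤ 2 * M := by linarith [abs_sub (w x) (w (x + z)), hM x, hM (x + z)]
  rw [norm_div, ← mul_div_assoc, norm_of_nonneg (r := ‖z‖ ^ _) (by positivity),
    mul_min_of_nonneg _ _ (le_max_of_le_left L.coe_nonneg), mul_one]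
  gcongr
  exact le_min (hnear.trans (by gcongr; exact le_max_left _ _)) (hfar.trans (le_max_right _ _))

lemma fracHalf_comp_smul (u : En n → ℝ) {κ : ℝ} (hκ : 0 < κ) (x : En n) :
    fracHalf n s (fun y => u (κ • y)) x = κ ^ s * fracHalf n s u (κ • x) := by
  have hscale (z : En n) : (u (κ • x) - u (κ • (x + z))) / ‖z‖ ^ ((n : ℝ) + s) =
      κ ^ ((n : ℝ) + s) * ((u (κ • x) - u (κ • x + κ • z)) / ‖κ • z‖ ^ ((n : ℝ) + s)) := by
    rw [norm_smul, norm_of_nonneg hκ.le, mul_rpow hκ.le (norm_nonneg z), smul_add,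
      mul_div_assoc', mul_div_mul_left _ _ (by positivity)]
  have hchange := Measure.integral_comp_smul_of_nonneg (volume : Measure (En n))
    (fun z => (u (κ • x) - u (κ • x + z)) / ‖z‖ ^ ((n : ℝ) + s)) κ (hR := hκ.le)
  rw [finrank_euclideanSpace_fin, smul_eq_mul] at hchange
  simp only [fracHalf, hscale]
  rw [integral_const_mul, hchange, rpow_add hκ, rpow_natCast]
  field_simp

lemma fracHalf_dilation_sub (hn : 1 ≤ n) (hs : s ∈ Ioo (0 : ℝ) 1) {u : En n → ℝ} {M : ℝ}
    {L : ℝ≥0} (hM : ∀ x, |u x| ≤ M) (hL : LipschitzWith L u) {κ : ℝ} (hκ : 0 < κ) (x : En n) :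
    fracHalf n s (fun y => u (κ • y) - u y) x =
      κ ^ s * fracHalf n s u (κ • x) - fracHalf n s u x := by
  have hdil := integrable_fracHalf_kernel hn hs (fun y => hM (κ • y))
    (hL.comp (lipschitzWith_smul κ)) x
  rw [← fracHalf_comp_smul u hκ, fracHalf, fracHalf, fracHalf, ← mul_sub,
    ← integral_sub hdil (integrable_fracHalf_kernel hn hs hM hL x)]
  simp only [sub_sub_sub_comm, sub_div]

/-- Minkowski's integral inequality bounds the `L²` norm of `fracHalf n s w` by the translation
modulus of `w`, integrated against the kernel. -/
lemma eLpNorm_fracHalf_le (hw : Continuous w) :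
    eLpNorm (fracHalf n s w) 2 volume ≤ ‖cK n (s / 2)‖ₑ *
      ∫⁻ z : En n, ENNReal.ofReal (‖z‖ ^ ((n : ℝ) + s))⁻¹ *
        eLpNorm (fun x => w x - w (x + z)) 2 volume := by
  have hF : Measurable (Function.uncurry fun x z : En n =>
      (‖z‖ ^ ((n : ℝ) + s))⁻¹ * (w x - w (x + z))) := by
    unfold Function.uncurry; fun_prop
  calc eLpNorm (fracHalf n s w) 2 volume
      = ‖cK n (s / 2)‖ₑ * eLpNorm
          (fun x => ∫ z : En n, (‖z‖ ^ ((n : ℝ) + s))⁻¹ * (w x - w (x + z))) 2 volume := by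
        rw [← eLpNorm_const_smul]
        simp only [← div_eq_inv_mul]
        rfl
    _ ≤ _ := by
        gcongr
        refine (eLpNorm_two_integral_le hF).trans_eq (lintegral_congr fun z => ?_)
        rw [← Real.enorm_of_nonneg (by positivity), ← eLpNorm_const_smul]
        rfl

lemma exists_eLpNorm_fracHalf_le (hn : 1 ≤ n) (hs : s ∈ Ioo (0 : ℝ) 1) :
    ∃ K : ℝ≥0, ∀ (w : En n → ℝ) (C : ℝ≥0) (r : ℝ), Continuous w → 0 < r →
      (∀ z, eLpNorm (fun x => w x - w (x + z)) 2 volume ≤ C * ENNReal.ofReal (min ‖z‖ r)) →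
      eLpNorm (fracHalf n s w) 2 volume ≤ K * C * ENNReal.ofReal (r ^ (1 - s)) := by
  set J := ∫⁻ z : En n, ENNReal.ofReal (min ‖z‖ 1 / ‖z‖ ^ ((n : ℝ) + s))
  have hJ : J ≠ ∞ := (integrable_min_norm_one_div_rpow_euclidean hn hs).lintegral_lt_top.ne
  refine ⟨‖cK n (s / 2)‖₊ * J.toNNReal, fun w C r hw hr hmod => ?_⟩
  calc eLpNorm (fracHalf n s w) 2 volume
      ≤ ‖cK n (s / 2)‖ₑ * ∫⁻ z : En n, ENNReal.ofReal (‖z‖ ^ ((n : ℝ) + s))⁻¹ *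
          (C * ENNReal.ofReal (min ‖z‖ r)) :=
        (eLpNorm_fracHalf_le hw).trans (by gcongr; exact hmod _)
    _ = ‖cK n (s / 2)‖ₑ * (C *
          ∫⁻ z : En n, ENNReal.ofReal (min ‖z‖ r / ‖z‖ ^ ((n : ℝ) + s))) := by
        rw [← lintegral_const_mul' _ _ ENNReal.coe_ne_top]
        congr 2 with z
        rw [div_eq_inv_mul, ENNReal.ofReal_mul (by positivity), mul_left_comm]
    _ = ‖cK n (s / 2)‖ₑ * (C * (ENNReal.ofReal (r ^ (1 - s)) * J)) := by
        have hscale := lintegral_min_norm_div_rpow (volume : Measure (En n)) (s := s) hr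
        rw [finrank_euclideanSpace_fin] at hscale
        rw [hscale]
    _ = _ := by
        rw [ENNReal.coe_mul, ENNReal.coe_toNNReal hJ, enorm_eq_nnnorm]
        ring

end FracHalf

section TranslationModulus

variable {E : Type*} [NormedAddCommGroup E] [NormedSpace ℝ E] {w : E → ℝ} {L : ℝ≥0}

lemma enorm_sub_add_le_lintegral_lineDeriv (hL : LipschitzWith L w) (x z : E) :
    ‖w x - w (x + z)‖ₑ ≤ ∫⁻ τ in Ioc (0 : ℝ) 1, ‖lineDeriv ℝ w (x + τ • z) z‖ₑ := by
  have hline : LipschitzWith (L * ‖z‖₊) fun τ : ℝ => w (x + τ • z) :=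
    hL.comp (LipschitzWith.of_dist_le_mul fun a b => by
      rw [dist_add_left, dist_eq_norm, ← sub_smul, norm_smul, mul_comm, dist_eq_norm, coe_nnnorm])
  have hderiv (τ : ℝ) : deriv (fun τ : ℝ => w (x + τ • z)) τ = lineDeriv ℝ w (x + τ • z) z := by
    rw [lineDeriv, ← add_zero τ, ← deriv_comp_const_add, add_zero]
    simp only [add_smul, add_assoc]
  have hftc := (hline.lipschitzOnWith (s := uIcc 0 1)).absolutelyContinuousOnInterval
    |>.integral_deriv_eq_sub
  simp only [one_smul, zero_smul, add_zero, hderiv] at hftc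
  rw [enorm_sub_rev, ← hftc, intervalIntegral.integral_of_le zero_le_one]
  exact enorm_integral_le_lintegral_enorm _

lemma lineDeriv_eq_zero_of_notMem_tsupport {x : E} (hx : x ∉ tsupport w) (z : E) :
    lineDeriv ℝ w x z = 0 := by
  rw [(notMem_tsupport_iff_eventuallyEq.1 hx).lineDeriv_eq, lineDeriv]
  exact deriv_const 0 _

variable [MeasurableSpace E] [BorelSpace E] (μ : Measure E)

lemma lintegral_enorm_lineDeriv_le (hL : LipschitzWith L w) {S : Set E} (hS : MeasurableSet S)
    (z : E) : ∫⁻ x, ‖lineDeriv ℝ w x z‖ₑ ∂μ ≤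
      ∫⁻ x in S, ‖lineDeriv ℝ w x z‖ₑ ∂μ + L * μ (tsupport w \ S) * ‖z‖ₑ := by
  have hle (x : E) :
      ‖lineDeriv ℝ w x z‖ₑ ≤ (tsupport w).indicator (fun _ => L * ‖z‖ₑ) x := by
    by_cases hx : x ∈ tsupport w
    · rw [indicator_of_mem hx]
      have hnorm : ‖lineDeriv ℝ w x z‖₊ ≤ L * ‖z‖₊ := norm_lineDeriv_le_of_lipschitz ℝ hL
      exact ENNReal.coe_le_coe.2 hnorm
    · simp [lineDeriv_eq_zero_of_notMem_tsupport hx]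
  rw [← lintegral_add_compl _ hS]
  gcongr
  calc ∫⁻ x in Sᶜ, ‖lineDeriv ℝ w x z‖ₑ ∂μ
      ≤ ∫⁻ x in Sᶜ, (tsupport w).indicator (fun _ => L * ‖z‖ₑ) x ∂μ := lintegral_mono hle
    _ = L * μ (tsupport w \ S) * ‖z‖ₑ := by
        rw [lintegral_indicator_const (isClosed_tsupport w).measurableSet,
          Measure.restrict_apply (isClosed_tsupport w).measurableSet, Set.sdiff_eq, mul_right_comm]

variable [FiniteDimensional ℝ E] [μ.IsAddHaarMeasure]

lemma lintegral_enorm_sub_add_le (hL : LipschitzWith L w) (z : E) :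
    ∫⁻ x, ‖w x - w (x + z)‖ₑ ∂μ ≤ ∫⁻ x, ‖lineDeriv ℝ w x z‖ₑ ∂μ := by
  have hmeas : Measurable fun p : E × ℝ => ‖lineDeriv ℝ w (p.1 + p.2 • z) z‖ₑ :=
    ((measurable_lineDeriv hL.continuous).comp
      (measurable_fst.add (measurable_snd.smul_const z))).enorm
  calc ∫⁻ x, ‖w x - w (x + z)‖ₑ ∂μ
      ≤ ∫⁻ x, (∫⁻ τ in Ioc (0 : ℝ) 1, ‖lineDeriv ℝ w (x + τ • z) z‖ₑ) ∂μ :=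
        lintegral_mono fun x => enorm_sub_add_le_lintegral_lineDeriv hL x z
    _ = ∫⁻ τ in Ioc (0 : ℝ) 1, ∫⁻ x, ‖lineDeriv ℝ w (x + τ • z) z‖ₑ ∂μ :=
        lintegral_lintegral_swap hmeas.aemeasurable
    _ = ∫⁻ x, ‖lineDeriv ℝ w x z‖ₑ ∂μ := by
        simp [lintegral_add_right_eq_self fun x => ‖lineDeriv ℝ w x z‖ₑ]

/-- Interpolate between the sup bound `L * ‖z‖` and the `L¹` bound `V * ‖z‖`. -/
lemma eLpNorm_two_sub_add_le (hL : LipschitzWith L w) {C V : ℝ≥0}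
    (hV : ∀ z, ∫⁻ x, ‖lineDeriv ℝ w x z‖ₑ ∂μ ≤ V * ‖z‖ₑ) (hC : L * V ≤ C ^ 2) (z : E) :
    eLpNorm (fun x => w x - w (x + z)) 2 μ ≤ C * ‖z‖ₑ := by
  have hsup (x : E) : ‖w x - w (x + z)‖ₑ ≤ L * ‖z‖ₑ := by
    simpa [edist_eq_enorm_sub] using hL.edist_le_mul x (x + z)
  rw [← ENNReal.pow_le_pow_left_iff two_ne_zero, eLpNorm_two_sq]
  calc ∫⁻ x, ‖w x - w (x + z)‖ₑ ^ 2 ∂μ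
      ≤ ∫⁻ x, L * ‖z‖ₑ * ‖w x - w (x + z)‖ₑ ∂μ := by
        gcongr with x
        rw [sq]
        gcongr
        exact hsup x
    _ ≤ L * ‖z‖ₑ * (V * ‖z‖ₑ) := by
        rw [lintegral_const_mul' _ _ (by finiteness)]
        gcongr
        exact (lintegral_enorm_sub_add_le μ hL z).trans (hV z)
    _ = (L * V : ℝ≥0) * ‖z‖ₑ ^ 2 := by push_cast; ring
    _ ≤ (C ^ 2 : ℝ≥0) * ‖z‖ₑ ^ 2 := by gcongr
    _ = (C * ‖z‖ₑ) ^ 2 := by push_cast; ring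

lemma eLpNorm_sub_add_le_two_mul (hw : Continuous w) {p : ℝ≥0∞} (hp : 1 ≤ p) (z : E) :
    eLpNorm (fun x => w x - w (x + z)) p μ ≤ 2 * eLpNorm w p μ := by
  have hshift := eLpNorm_comp_measurePreserving (p := p) hw.aestronglyMeasurable
    (measurePreserving_add_right μ z)
  rw [two_mul]
  nth_rw 2 [← hshift]
  exact eLpNorm_sub_le hw.aestronglyMeasurable (by fun_prop) hp

end TranslationModulus

section FracHalfEstimates

variable {n : ℕ} {s : ℝ}

lemma exists_eLpNorm_fracHalf_le_of_variation (hn : 1 ≤ n) (hs : s ∈ Ioo (0 : ℝ) 1) :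
    ∃ K : ℝ≥0, ∀ (w : En n → ℝ) (L V C : ℝ≥0) (r : ℝ), LipschitzWith L w →
      (∀ z, ∫⁻ x, ‖lineDeriv ℝ w x z‖ₑ ≤ V * ‖z‖ₑ) → L * V ≤ C ^ 2 → 0 < r →
      2 * eLpNorm w 2 volume ≤ C * ENNReal.ofReal r →
      eLpNorm (fracHalf n s w) 2 volume ≤ K * C * ENNReal.ofReal (r ^ (1 - s)) := by
  obtain ⟨K, hK⟩ := exists_eLpNorm_fracHalf_le hn hs
  refine ⟨K, fun w L V C r hL hV hLV hr hnorm => hK w C r hL.continuous hr fun z => ?_⟩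
  rw [ENNReal.ofReal_min, mul_min, ofReal_norm]
  exact le_min (eLpNorm_two_sub_add_le volume hL hV hLV z)
    ((eLpNorm_sub_add_le_two_mul volume hL.continuous one_le_two z).trans hnorm)

lemma memLp_two_fracHalf (hn : 1 ≤ n) (hs : s ∈ Ioo (0 : ℝ) 1) {u : En n → ℝ} {L : ℝ≥0}
    (hL : LipschitzWith L u) (hu : HasCompactSupport u) : MemLp (fracHalf n s u) 2 := by
  obtain ⟨K, hK⟩ := exists_eLpNorm_fracHalf_le_of_variation hn hs
  have hmem : MemLp u 2 := hL.continuous.memLp_of_hasCompactSupport hu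
  set V := (volume (tsupport u)).toNNReal
  have hV : volume (tsupport u) = V := (ENNReal.coe_toNNReal hu.isCompact.measure_ne_top).symm
  set N := (eLpNorm u 2 volume).toNNReal
  have hN : eLpNorm u 2 volume = N := (ENNReal.coe_toNNReal hmem.eLpNorm_ne_top).symm
  have hvar (z : En n) : ∫⁻ x, ‖lineDeriv ℝ u x z‖ₑ ≤ (L * V : ℝ≥0) * ‖z‖ₑ := by
    simpa [hV] using lintegral_enorm_lineDeriv_le volume hL MeasurableSet.empty z
  set C := L * (L * V) + 2 * N + 1
  have hC : L * (L * V) ≤ C ^ 2 :=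
    (le_add_right le_self_add : _ ≤ C).trans (le_self_pow₀ le_add_self two_ne_zero)
  have hnorm : 2 * eLpNorm u 2 volume ≤ C * ENNReal.ofReal 1 := by
    rw [hN, ENNReal.ofReal_one, mul_one]
    exact mod_cast (le_add_right le_add_self : 2 * N ≤ C)
  exact ⟨(stronglyMeasurable_fracHalf hL.continuous).aestronglyMeasurable,
    (hK u L (L * V) C 1 hL hvar hC one_pos hnorm).trans_lt (by finiteness)⟩

end FracHalfEstimates

section DilationIncrement

variable {E : Type*} [NormedAddCommGroup E] [NormedSpace ℝ E] {u : E → ℝ} {Ω : Set E} {L : ℝ≥0}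
  {κ : ℝ} {x : E}

/-- The increment of `u` under the dilation by `κ`, whose half-Laplacian governs the dilation of
`fracHalf n s u`. -/
def dilationIncrement (κ : ℝ) (u : E → ℝ) (x : E) : ℝ :=
  u (κ • x) - u x

lemma lipschitzWith_dilationIncrement (hL : LipschitzWith L u) (κ : ℝ) :
    LipschitzWith (L * (‖κ‖₊ + 1)) (dilationIncrement κ u) := by
  simpa only [mul_add, mul_one] using! (hL.comp (lipschitzWith_smul κ)).sub hL

lemma lipschitzWith_dilationIncrement_of_le_two (hL : LipschitzWith L u) (hκ : κ ∈ Icc 0 2) :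
    LipschitzWith (3 * L) (dilationIncrement κ u) := by
  refine (lipschitzWith_dilationIncrement hL κ).weaken ?_
  rw [mul_comm]
  gcongr
  rw [← NNReal.coe_le_coe, NNReal.coe_add, coe_nnnorm, norm_of_nonneg hκ.1]
  norm_num
  linarith [hκ.2]

lemma abs_dilationIncrement_le (hL : LipschitzWith L u) (hκ : 1 ≤ κ) (x : E) :
    |dilationIncrement κ u x| ≤ L * ((κ - 1) * ‖x‖) := by
  have h := hL.dist_le_mul (κ • x) x
  rwa [Real.dist_eq, dist_eq_norm, show κ • x - x = (κ - 1) • x by module, norm_smul,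
    norm_of_nonneg (sub_nonneg.2 hκ)] at h

lemma StrictStarConvex.smul_mem_of_smul_mem (h : StrictStarConvex Ω) (hx : κ • x ∈ Ω) {τ : ℝ}
    (hτ : τ ∈ Icc 0 κ) : τ • x ∈ Ω := by
  obtain rfl | hlt := hτ.2.eq_or_lt
  · exact hx
  have hκ : 0 < κ := hτ.1.trans_lt hlt
  have hmem := h _ (subset_closure hx) (τ / κ) ⟨div_nonneg hτ.1 hκ.le, (div_lt_one hκ).2 hlt⟩
  rwa [smul_smul, div_mul_cancel₀ _ hκ.ne'] at hmem

lemma StrictStarConvex.support_dilationIncrement_subset (h : StrictStarConvex Ω)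
    (hzero : ∀ x ∉ Ω, u x = 0) (hκ : 1 ≤ κ) : Function.support (dilationIncrement κ u) ⊆ Ω := by
  intro x hx
  by_contra hxΩ
  have hκx : κ • x ∉ Ω := fun hmem =>
    hxΩ (by simpa using h.smul_mem_of_smul_mem hmem ⟨zero_le_one, hκ⟩)
  exact hx (by simp [dilationIncrement, hzero _ hxΩ, hzero _ hκx])

lemma hasFDerivAt_dilationIncrement (hκx : DifferentiableAt ℝ u (κ • x))
    (hx : DifferentiableAt ℝ u x) :
    HasFDerivAt (dilationIncrement κ u) (κ • fderiv ℝ u (κ • x) - fderiv ℝ u x) x := by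
  have hcomp : DifferentiableAt ℝ (fun y => u (κ • y)) x :=
    hκx.comp x (differentiableAt_id.const_smul κ)
  rw [← fderiv_comp_smul]
  exact hcomp.hasFDerivAt.sub hx.hasFDerivAt

/-- The bound `|Du(y)| + |D²u(y)| |y|` for the derivative in `τ` of the gradient
`D(u(τ •))(x) = τ Du(τ x)`, expressed at `y = τ x`. -/
def radialGradientVariation (u : E → ℝ) (y : E) : ℝ :=
  ‖fderiv ℝ u y‖ + ‖fderiv ℝ (fderiv ℝ u) y‖ * ‖y‖

lemma enorm_lineDeriv_dilationIncrement_le (hΩ : IsOpen Ω) (hu : ContDiffOn ℝ 2 u Ω) (hκ : 1 ≤ κ)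
    (hx : ∀ τ ∈ Icc 1 κ, τ • x ∈ Ω) (z : E) :
    ‖lineDeriv ℝ (dilationIncrement κ u) x z‖ₑ ≤
      (∫⁻ τ in Icc 1 κ, ENNReal.ofReal (radialGradientVariation u (τ • x))) * ‖z‖ₑ := by
  have hDu : ContDiffOn ℝ 1 (fderiv ℝ u) Ω := hu.fderiv_of_isOpen hΩ (by norm_num)
  have hdiff {τ : ℝ} (hτ : τ ∈ Icc 1 κ) : DifferentiableAt ℝ u (τ • x) :=
    (hu.differentiableOn two_ne_zero).differentiableAt (hΩ.mem_nhds (hx τ hτ))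
  have hv := hasFDerivAt_dilationIncrement (hdiff (right_mem_Icc.2 hκ))
    (by simpa using hdiff (left_mem_Icc.2 hκ))
  have hradial : ContDiffOn ℝ 1 (fun τ : ℝ => τ • fderiv ℝ u (τ • x)) (Icc 1 κ) :=
    contDiffOn_id.smul (hDu.comp (by fun_prop) hx)
  have hftc := enorm_sub_le_lintegral_deriv_of_contDiffOn_Icc hradial hκ
  rw [one_smul, one_smul, ← hv.fderiv] at hftc
  rw [hv.differentiableAt.lineDeriv_eq_fderiv]
  refine (ContinuousLinearMap.le_opENorm _ z).trans
    (mul_le_mul_left (hftc.trans (setLIntegral_mono' measurableSet_Icc fun τ hτ => ?_)) _)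
  have hDuτ : HasFDerivAt (fderiv ℝ u) (fderiv ℝ (fderiv ℝ u) (τ • x)) (τ • x) :=
    ((hDu.differentiableOn one_ne_zero).differentiableAt (hΩ.mem_nhds (hx τ hτ))).hasFDerivAt
  have hline : HasDerivAt (fun τ : ℝ => τ • x) x τ := by
    simpa using (hasDerivAt_id τ).smul_const x
  have hderiv : HasDerivAt (fun τ : ℝ => τ • fderiv ℝ u (τ • x))
      (fderiv ℝ (fderiv ℝ u) (τ • x) (τ • x) + fderiv ℝ u (τ • x)) τ := by
    simpa using! (hasDerivAt_id τ).smul (hDuτ.comp_hasDerivAt τ hline)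
  rw [hderiv.deriv, ← ofReal_norm, add_comm]
  exact ENNReal.ofReal_le_ofReal ((norm_add_le _ _).trans
    (add_le_add_right (ContinuousLinearMap.le_opNorm _ _) _))

variable [MeasurableSpace E] (μ : Measure E)

lemma StrictStarConvex.eLpNorm_dilationIncrement_le (h : StrictStarConvex Ω)
    (hΩ : MeasurableSet Ω) (hL : LipschitzWith L u) (hzero : ∀ x ∉ Ω, u x = 0) (hκ : 1 ≤ κ)
    {R : ℝ} (hR : ∀ x ∈ Ω, ‖x‖ ≤ R) (p : ℝ≥0∞) :
    eLpNorm (dilationIncrement κ u) p μ ≤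
      μ Ω ^ p.toReal⁻¹ * ENNReal.ofReal (L * ((κ - 1) * R)) := by
  rw [← eLpNorm_restrict_eq_of_support_subset (h.support_dilationIncrement_subset hzero hκ)]
  refine (eLpNorm_le_of_ae_bound (C := L * ((κ - 1) * R))
    (ae_restrict_of_forall_mem hΩ fun x hx => ?_)).trans_eq (by simp)
  have := sub_nonneg.2 hκ
  exact (abs_dilationIncrement_le hL hκ x).trans (by gcongr; exact hR x hx)

lemma StrictStarConvex.exists_eLpNorm_dilationIncrement_le (h : StrictStarConvex Ω)
    (hΩ : MeasurableSet Ω) (hfin : μ Ω ≠ ∞) (hb : IsBounded Ω) (hL : LipschitzWith L u)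
    (hzero : ∀ x ∉ Ω, u x = 0) (p : ℝ≥0∞) :
    ∃ B : ℝ≥0, ∀ κ : ℝ, 1 ≤ κ →
      eLpNorm (dilationIncrement κ u) p μ ≤ B * ENNReal.ofReal (κ - 1) := by
  obtain ⟨R, hR⟩ := hb.exists_norm_le
  have hpow : μ Ω ^ p.toReal⁻¹ ≠ ∞ := ENNReal.rpow_ne_top_of_nonneg (by positivity) hfin
  refine ⟨(μ Ω ^ p.toReal⁻¹).toNNReal * L * R.toNNReal, fun κ hκ => ?_⟩
  refine (h.eLpNorm_dilationIncrement_le μ hΩ hL hzero hκ hR p).trans_eq ?_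
  rw [ENNReal.ofReal_mul L.coe_nonneg, ENNReal.ofReal_mul (sub_nonneg.2 hκ),
    ENNReal.ofReal_coe_nnreal, ENNReal.coe_mul, ENNReal.coe_mul, ENNReal.coe_toNNReal hpow,
    mul_comm (ENNReal.ofReal (κ - 1)), mul_assoc, mul_assoc, ENNReal.ofReal]

variable [BorelSpace E]

lemma measurable_radialGradientVariation (u : E → ℝ) : Measurable (radialGradientVariation u) :=
  (measurable_fderiv ℝ u).norm.add ((measurable_fderiv ℝ (fderiv ℝ u)).norm.mul measurable_norm)

lemma integrableOn_radialGradientVariation (hΩ : MeasurableSet Ω) (hfin : μ Ω ≠ ∞)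
    (hb : IsBounded Ω) (hL : LipschitzWith L u)
    (hD2u : IntegrableOn (fun x => ‖fderiv ℝ (fderiv ℝ u) x‖) Ω μ) :
    IntegrableOn (radialGradientVariation u) Ω μ := by
  obtain ⟨R, hR⟩ := hb.exists_norm_le
  refine Integrable.mono' ((integrableOn_const hfin (C := (L : ℝ))).add (hD2u.mul_const R))
    (measurable_radialGradientVariation u).aestronglyMeasurable
    (ae_restrict_of_forall_mem hΩ fun x hx => ?_)
  rw [norm_of_nonneg (by unfold radialGradientVariation; positivity)]
  exact add_le_add (norm_fderiv_le_of_lipschitz ℝ hL)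
    (mul_le_mul_of_nonneg_left (hR x hx) (by positivity))

variable [FiniteDimensional ℝ E] [μ.IsAddHaarMeasure]

lemma StrictStarConvex.lintegral_enorm_lineDeriv_dilationIncrement_le (h : StrictStarConvex Ω)
    (hΩ : IsOpen Ω) (hu : ContDiffOn ℝ 2 u Ω) (hκ : 1 ≤ κ) (z : E) :
    ∫⁻ x in (κ • ·) ⁻¹' Ω, ‖lineDeriv ℝ (dilationIncrement κ u) x z‖ₑ ∂μ ≤
      ENNReal.ofReal (κ - 1) * (∫⁻ y in Ω, ENNReal.ofReal (radialGradientVariation u y) ∂μ) *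
        ‖z‖ₑ := by
  set H := Ω.indicator fun y => ENNReal.ofReal (radialGradientVariation u y) with hH_def
  have hH : Measurable H :=
    (measurable_radialGradientVariation u).ennreal_ofReal.indicator hΩ.measurableSet
  have hHsmul : Measurable fun p : E × ℝ => H (p.2 • p.1) :=
    hH.comp (measurable_snd.smul measurable_fst)
  have hpointwise (x : E) (hx : x ∈ (κ • ·) ⁻¹' Ω) :
      ‖lineDeriv ℝ (dilationIncrement κ u) x z‖ₑ ≤ (∫⁻ τ in Icc 1 κ, H (τ • x)) * ‖z‖ₑ := by
    have hmem (τ : ℝ) (hτ : τ ∈ Icc 1 κ) : τ • x ∈ Ω :=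
      h.smul_mem_of_smul_mem hx ⟨zero_le_one.trans hτ.1, hτ.2⟩
    refine (enorm_lineDeriv_dilationIncrement_le hΩ hu hκ hmem z).trans_eq ?_
    congr 1
    refine setLIntegral_congr_fun measurableSet_Icc fun τ hτ => ?_
    simp only [hH_def, indicator_of_mem (hmem τ hτ)]
  calc ∫⁻ x in (κ • ·) ⁻¹' Ω, ‖lineDeriv ℝ (dilationIncrement κ u) x z‖ₑ ∂μ
      ≤ ∫⁻ x in (κ • ·) ⁻¹' Ω, (∫⁻ τ in Icc 1 κ, H (τ • x)) * ‖z‖ₑ ∂μ :=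
        setLIntegral_mono' (hΩ.measurableSet.preimage (measurable_const_smul κ)) hpointwise
    _ ≤ (∫⁻ x, (∫⁻ τ in Icc 1 κ, H (τ • x)) ∂μ) * ‖z‖ₑ :=
        (setLIntegral_le_lintegral _ _).trans_eq (lintegral_mul_const' _ _ enorm_ne_top)
    _ = (∫⁻ τ in Icc 1 κ, ∫⁻ x, H (τ • x) ∂μ) * ‖z‖ₑ := by
        rw [lintegral_lintegral_swap hHsmul.aemeasurable]
    _ ≤ (∫⁻ _ in Icc 1 κ, ∫⁻ x, H x ∂μ) * ‖z‖ₑ := mul_le_mul_left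
        (setLIntegral_mono' measurableSet_Icc fun τ hτ => lintegral_comp_smul_le μ H hτ.1) _
    _ = _ := by
        rw [lintegral_indicator hΩ.measurableSet, setLIntegral_const, Real.volume_Icc,
          mul_comm (lintegral _ _)]

/-- The collar is contained in `κ • Ω \ κ⁻¹ • Ω`. -/
lemma StrictStarConvex.measure_closure_sdiff_preimage_smul_le (h : StrictStarConvex Ω)
    (hΩ : MeasurableSet Ω) (hfin : μ Ω ≠ ∞) (hκ : κ ∈ Ioc (1 : ℝ) 2) :
    μ (closure Ω \ (κ • ·) ⁻¹' Ω) ≤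
      ENNReal.ofReal (2 ^ (finrank ℝ E + 1) * finrank ℝ E * (κ - 1)) * μ Ω := by
  have hκ0 : 0 < κ := one_pos.trans hκ.1
  have hinv : κ⁻¹ ∈ Ioo (0 : ℝ) 1 := ⟨inv_pos.2 hκ0, inv_lt_one_of_one_lt₀ hκ.1⟩
  have hsq : (κ⁻¹ ^ 2) • κ • Ω = (κ • ·) ⁻¹' Ω := by
    rw [smul_smul, sq, mul_assoc, inv_mul_cancel₀ hκ0.ne', mul_one, preimage_smul₀ hκ0.ne']
  have hclosure : closure Ω ⊆ κ • Ω := fun x hx =>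
    (mem_smul_set_iff_inv_smul_mem₀ hκ0.ne' _ _).2 (h x hx _ (Ioo_subset_Ico_self hinv))
  have hsub : (κ⁻¹ ^ 2) • κ • Ω ⊆ κ • Ω := by
    rw [hsq]
    intro x hx
    refine hclosure (subset_closure ?_)
    simpa using h.smul_mem_of_smul_mem hx ⟨zero_le_one, hκ.1.le⟩
  have hμ : μ (κ • Ω) = ENNReal.ofReal (κ ^ finrank ℝ E) * μ Ω :=
    Measure.addHaar_smul_of_nonneg μ hκ0.le Ω
  calc μ (closure Ω \ (κ • ·) ⁻¹' Ω)
      ≤ μ (κ • Ω \ (κ⁻¹ ^ 2) • κ • Ω) := by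
        rw [hsq]; gcongr
    _ ≤ ENNReal.ofReal (finrank ℝ E * (1 - κ⁻¹ ^ 2)) * μ (κ • Ω) :=
        measure_sdiff_smul_le μ (hΩ.const_smul_of_ne_zero hκ0.ne') (hμ ▸ by finiteness)
          ⟨pow_pos hinv.1 2, pow_le_one₀ hinv.1.le hinv.2.le⟩ hsub
    _ ≤ ENNReal.ofReal (2 ^ (finrank ℝ E + 1) * finrank ℝ E * (κ - 1)) * μ Ω := by
        rw [hμ, ← mul_assoc, ← ENNReal.ofReal_mul' (by positivity)]
        gcongr ENNReal.ofReal ?_ * _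
        have hinv_ge : 1 - κ⁻¹ ^ 2 ≤ 2 * (κ - 1) := by
          nlinarith [mul_inv_cancel₀ hκ0.ne', hinv.1, hinv.2, hκ.1]
        have hκ1 := sub_nonneg.2 hκ.1.le
        calc finrank ℝ E * (1 - κ⁻¹ ^ 2) * κ ^ finrank ℝ E
            ≤ finrank ℝ E * (2 * (κ - 1)) * 2 ^ finrank ℝ E := by gcongr; exact hκ.2
          _ = 2 ^ (finrank ℝ E + 1) * finrank ℝ E * (κ - 1) := by ring

lemma StrictStarConvex.exists_lintegral_enorm_lineDeriv_dilationIncrement_le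
    (h : StrictStarConvex Ω) (hΩ : IsOpen Ω) (hb : IsBounded Ω) (hu : ContDiffOn ℝ 2 u Ω)
    (hL : LipschitzWith L u) (hzero : ∀ x ∉ Ω, u x = 0)
    (hD2u : IntegrableOn (fun x => ‖fderiv ℝ (fderiv ℝ u) x‖) Ω μ) :
    ∃ A : ℝ≥0, ∀ κ ∈ Ioc (1 : ℝ) 2, ∀ z,
      ∫⁻ x, ‖lineDeriv ℝ (dilationIncrement κ u) x z‖ₑ ∂μ ≤
        A * ENNReal.ofReal (κ - 1) * ‖z‖ₑ := by
  set I := ∫⁻ x in Ω, ENNReal.ofReal (radialGradientVariation u x) ∂μ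
  have hμ : μ Ω ≠ ∞ := hb.measure_lt_top.ne
  have hI : I ≠ ∞ :=
    (integrableOn_radialGradientVariation μ hΩ.measurableSet hμ hb hL hD2u).lintegral_lt_top.ne
  set d := finrank ℝ E
  refine ⟨I.toNNReal + 3 * L * (2 ^ (d + 1) * d * (μ Ω).toNNReal), fun κ hκ z => ?_⟩
  set v := dilationIncrement κ u
  have hcollar : μ (tsupport v \ (κ • ·) ⁻¹' Ω) ≤
      ENNReal.ofReal (2 ^ (d + 1) * d * (κ - 1)) * μ Ω := by
    grw [← h.measure_closure_sdiff_preimage_smul_le μ hΩ.measurableSet hμ hκ]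
    exact measure_mono (sdiff_subset_sdiff_left
      (closure_mono (h.support_dilationIncrement_subset hzero hκ.1.le)))
  calc ∫⁻ x, ‖lineDeriv ℝ v x z‖ₑ ∂μ
      ≤ ∫⁻ x in (κ • ·) ⁻¹' Ω, ‖lineDeriv ℝ v x z‖ₑ ∂μ +
          (3 * L : ℝ≥0) * μ (tsupport v \ (κ • ·) ⁻¹' Ω) * ‖z‖ₑ :=
        lintegral_enorm_lineDeriv_le μ
          (lipschitzWith_dilationIncrement_of_le_two hL ⟨zero_le_one.trans hκ.1.le, hκ.2⟩)
          (hΩ.measurableSet.preimage (measurable_const_smul κ)) z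
    _ ≤ ENNReal.ofReal (κ - 1) * I * ‖z‖ₑ + (3 * L : ℝ≥0) *
          (ENNReal.ofReal (2 ^ (d + 1) * d * (κ - 1)) * μ Ω) * ‖z‖ₑ := by
        gcongr
        exact h.lintegral_enorm_lineDeriv_dilationIncrement_le μ hΩ hu hκ.1.le z
    _ = _ := by
        rw [ENNReal.ofReal_mul (by positivity), ENNReal.ofReal_mul (by positivity),
          ENNReal.ofReal_pow zero_le_two, ENNReal.ofReal_ofNat, ENNReal.ofReal_natCast]
        push_cast
        rw [ENNReal.coe_toNNReal hI, ENNReal.coe_toNNReal hμ]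
        ring

end DilationIncrement

section FracHalfDilation

variable {n : ℕ} {s : ℝ} {u : En n → ℝ} {Ω : Set (En n)} {L : ℝ≥0}

lemma sqrt_mul_sqrt_rpow {t : ℝ} (ht : 0 < t) : √t * √t ^ (1 - s) = t ^ (1 - s / 2) := by
  rw [sqrt_eq_rpow, ← rpow_mul ht.le, ← rpow_add ht]
  ring_nf

/-- With `t = κ - 1`, the dilation increment has size `O(t)` and variation `O(t)`, so its
translation modulus is `O(√t)` times the minimum of the length and `√t`. -/
lemma StrictStarConvex.exists_eLpNorm_fracHalf_dilationIncrement_le (hn : 1 ≤ n)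
    (hs : s ∈ Ioo (0 : ℝ) 1) (h : StrictStarConvex Ω) (hΩ : IsOpen Ω) (hb : IsBounded Ω)
    (hu : ContDiffOn ℝ 2 u Ω) (hL : LipschitzWith L u) (hzero : ∀ x ∉ Ω, u x = 0)
    (hD2u : IntegrableOn (fun x => ‖hess n u x‖) Ω) :
    ∃ K : ℝ≥0, ∀ κ ∈ Ioc (1 : ℝ) 2, eLpNorm (fracHalf n s (dilationIncrement κ u)) 2 volume ≤
      K * ENNReal.ofReal ((κ - 1) ^ (1 - s / 2)) := by
  obtain ⟨K, hK⟩ := exists_eLpNorm_fracHalf_le_of_variation hn hs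
  obtain ⟨A, hA⟩ := h.exists_lintegral_enorm_lineDeriv_dilationIncrement_le volume hΩ hb hu hL
    hzero hD2u
  obtain ⟨B, hB⟩ := h.exists_eLpNorm_dilationIncrement_le volume hΩ.measurableSet
    hb.measure_lt_top.ne hb hL hzero 2
  set C := 3 * L * A + 2 * B + 1
  have hCA : 3 * L * A ≤ C ^ 2 :=
    (le_add_right le_self_add : _ ≤ C).trans (le_self_pow₀ le_add_self two_ne_zero)
  have hCB : 2 * B ≤ C := le_add_right le_add_self
  refine ⟨K * C, fun κ hκ => ?_⟩
  have hκ1 : 0 < κ - 1 := sub_pos.2 hκ.1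
  set t := (κ - 1).toNNReal
  have hnorm : 2 * eLpNorm (dilationIncrement κ u) 2 volume ≤
      (C * NNReal.sqrt t : ℝ≥0) * ENNReal.ofReal √(κ - 1) := by
    calc 2 * eLpNorm (dilationIncrement κ u) 2 volume
        ≤ 2 * (B * t) := mul_le_mul_right (hB κ hκ.1.le) 2
      _ = (2 * B : ℝ≥0) * t := by push_cast; ring
      _ ≤ C * t := by gcongr
      _ = (C * NNReal.sqrt t : ℝ≥0) * ENNReal.ofReal √(κ - 1) := by
          rw [Real.sqrt, ENNReal.ofReal_coe_nnreal, ← ENNReal.coe_mul, ← ENNReal.coe_mul,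
            mul_assoc, NNReal.mul_self_sqrt]
  calc eLpNorm (fracHalf n s (dilationIncrement κ u)) 2 volume
      ≤ K * (C * NNReal.sqrt t : ℝ≥0) * ENNReal.ofReal (√(κ - 1) ^ (1 - s)) := by
        refine hK _ (3 * L) (A * t) _ _
          (lipschitzWith_dilationIncrement_of_le_two hL ⟨zero_le_one.trans hκ.1.le, hκ.2⟩)
          (fun z => ?_) ?_ (sqrt_pos.2 hκ1) hnorm
        · rw [ENNReal.coe_mul]
          exact hA κ hκ z
        · rw [mul_pow, NNReal.sq_sqrt, ← mul_assoc]
          gcongr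
    _ = (K * C : ℝ≥0) * ENNReal.ofReal ((κ - 1) ^ (1 - s / 2)) := by
        rw [← sqrt_mul_sqrt_rpow hκ1, ENNReal.ofReal_mul (sqrt_nonneg _), Real.sqrt,
          ENNReal.ofReal_coe_nnreal]
        push_cast
        ring

lemma continuousOn_hess (hΩ : IsOpen Ω) (hu : ContDiffOn ℝ 2 u Ω) : ContinuousOn (hess n u) Ω :=
  (hu.fderiv_of_isOpen hΩ (m := 1) (by norm_num)).continuousOn_fderiv_of_isOpen hΩ le_rfl

lemma StarCond.integrableOn_norm_hess (hn : 1 ≤ n) {ρ : ℝ} (hρ : 0 < ρ)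
    (hball : StarConvexBall ρ Ω) (hΩ : IsOpen Ω) (hb : IsBounded Ω)
    (hne : (frontier Ω).Nonempty) (hu : ContDiffOn ℝ 2 u Ω) (hstar : StarCond n s Ω u) :
    IntegrableOn (fun x => ‖hess n u x‖) Ω := by
  obtain ⟨C, -, γ, hγ, hC⟩ := hstar
  have : Nonempty (Fin n) := ⟨⟨0, hn⟩⟩
  have hcont : ContinuousOn (fun x => ‖hess n u x‖) Ω :=
    (continuous_norm (E := En n →L[ℝ] En n →L[ℝ] ℝ)).comp_continuousOn (continuousOn_hess hΩ hu)
  refine hball.integrableOn_of_norm_le (C := C) volume hρ hΩ hb hne hcont hγ fun x hx => ?_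
  rw [norm_of_nonneg (by positivity)]
  exact (hC x hx).1

end FracHalfDilation

section DilationPairing

lemma lpNorm_two_sq {α : Type*} {_ : MeasurableSpace α} {μ : Measure α} {f : α → ℝ}
    (hf : AEStronglyMeasurable f μ) : lpNorm f 2 μ ^ 2 = ∫ x, f x ^ 2 ∂μ := by
  rw [lpNorm_eq_integral_norm_rpow_toReal two_ne_zero ENNReal.ofNat_ne_top hf,
    ENNReal.toReal_ofNat, ← rpow_mul_natCast (integral_nonneg fun x => by positivity)]
  simp

variable {E : Type*} [NormedAddCommGroup E] [NormedSpace ℝ E] [MeasurableSpace E]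

/-- The function `Φ(λ) = ∫ g(λx) g(x/λ) dx` attached to `g`. -/
def dilationPairing (μ : Measure E) (g : E → ℝ) (lam : ℝ) : ℝ :=
  ∫ x, g (lam • x) * g (lam⁻¹ • x) ∂μ

variable [BorelSpace E] [FiniteDimensional ℝ E] (μ : Measure E) [μ.IsAddHaarMeasure] {g : E → ℝ}

lemma dilationPairing_eq_pow_mul_integral (g : E → ℝ) {lam : ℝ} (hlam : 0 < lam) :
    dilationPairing μ g lam = lam ^ finrank ℝ E * ∫ x, g (lam ^ 2 • x) * g x ∂μ := by
  have hchange := Measure.integral_comp_inv_smul_of_nonneg μ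
    (fun x => g (lam ^ 2 • x) * g x) hlam.le
  rw [smul_eq_mul] at hchange
  rw [← hchange, dilationPairing]
  simp only [smul_smul, sq, mul_inv_cancel_right₀ hlam.ne']

lemma memLp_comp_smul {F : Type*} [NormedAddCommGroup F] {f : E → F} {p : ℝ≥0∞} {κ : ℝ}
    (hκ : κ ≠ 0) (hf : MemLp f p μ) : MemLp (fun x => f (κ • x)) p μ := by
  refine MemLp.comp_of_map ?_ (measurable_const_smul κ).aemeasurable
  rw [Measure.map_addHaar_smul μ hκ]
  exact hf.smul_measure ENNReal.ofReal_ne_top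

/-- The dilation `lam ^ d * g (lam ^ 2 • ·)` preserves the `L²` norm, so polarization turns the
pairing into a squared distance. -/
lemma dilationPairing_sub_dilationPairing_one (hg : MemLp g 2 μ) {lam : ℝ} (hlam : 0 < lam) :
    dilationPairing μ g lam - dilationPairing μ g 1 =
      -(1 / 2) * lpNorm (fun x => lam ^ finrank ℝ E * g (lam ^ 2 • x) - g x) 2 μ ^ 2 := by
  have hκ : lam ^ 2 ≠ 0 := by positivity
  set a := lam ^ finrank ℝ E
  have hdil := memLp_comp_smul μ hκ hg
  have hnorm : a ^ 2 * ∫ x, g (lam ^ 2 • x) ^ 2 ∂μ = ∫ x, g x ^ 2 ∂μ := by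
    rw [Measure.integral_comp_smul_of_nonneg μ (fun x => g x ^ 2) _ (hR := by positivity),
      smul_eq_mul, pow_right_comm, mul_inv_cancel_left₀ (by positivity)]
  have hone : dilationPairing μ g 1 = ∫ x, g x ^ 2 ∂μ := by simp [dilationPairing, sq]
  have hexpand : ∫ x, (a * g (lam ^ 2 • x) - g x) ^ 2 ∂μ =
      a ^ 2 * (∫ x, g (lam ^ 2 • x) ^ 2 ∂μ) - 2 * (a * ∫ x, g (lam ^ 2 • x) * g x ∂μ) +
        ∫ x, g x ^ 2 ∂μ := by
    have hcross : Integrable (fun x => 2 * (a * (g (lam ^ 2 • x) * g x))) μ :=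
      ((hdil.integrable_mul hg).const_mul a).const_mul 2
    have hsq := hdil.integrable_sq.const_mul (a ^ 2)
    simp only [← integral_const_mul]
    rw [← integral_sub hsq hcross]
    refine Eq.trans ?_ (integral_add (hsq.sub hcross) hg.integrable_sq)
    congr with x
    ring
  have hmeas : AEStronglyMeasurable (fun x => a * g (lam ^ 2 • x) - g x) μ :=
    ((hdil.const_mul a).sub hg).aestronglyMeasurable
  rw [lpNorm_two_sq hmeas, hexpand, hnorm, hone, dilationPairing_eq_pow_mul_integral μ g hlam]
  ring

end DilationPairing

section Asymptotics

variable {n : ℕ} {s : ℝ} {u : En n → ℝ} {Ω : Set (En n)} {L : ℝ≥0}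

lemma hasCompactSupport_of_isBounded {α β : Type*} [PseudoMetricSpace α] [ProperSpace α] [Zero β]
    {f : α → β} {S : Set α} (hb : IsBounded S) (hzero : ∀ x ∉ S, f x = 0) :
    HasCompactSupport f :=
  .intro hb.isCompact_closure fun x hx => hzero x fun hmem => hx (subset_closure hmem)

lemma isBigO_rpow_sub_one (p : ℝ) :
    (fun lam : ℝ => lam ^ p - 1) =O[𝓝 1] fun lam => lam - 1 := by
  simpa using (Real.hasDerivAt_rpow_const (p := p) (Or.inl one_ne_zero)).isBigO_sub

lemma tendsto_sub_one_nhdsGT : Tendsto (fun lam : ℝ => lam - 1) (𝓝[>] 1) (𝓝[>] 0) := by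
  refine tendsto_nhdsWithin_iff.2
    ⟨?_, eventually_mem_nhdsWithin.mono fun _ hlam => sub_pos.2 (mem_Ioi.1 hlam)⟩
  exact (tendsto_sub_nhds_zero_iff.2 (tendsto_id (x := 𝓝 (1 : ℝ)))).mono_left nhdsWithin_le_nhds

lemma isBigO_sub_one_rpow_of_le_one {p : ℝ} (hp : p ≤ 1) :
    (fun lam : ℝ => lam - 1) =O[𝓝[>] 1] fun lam => (lam - 1) ^ p :=
  (IsBigO.id_rpow_of_le_one hp).comp_tendsto
    (tendsto_sub_one_nhdsGT.mono_right (nhdsWithin_mono 0 Ioi_subset_Ici_self))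

lemma isLittleO_sub_one_rpow {p : ℝ} (hp : 1 < p) :
    (fun lam : ℝ => (lam - 1) ^ p) =o[𝓝[>] 1] fun lam => lam - 1 := by
  have hzero : Tendsto (fun t : ℝ => t ^ (p - 1)) (𝓝[>] 0) (𝓝 0) :=
    tendsto_nhdsWithin_of_tendsto_nhds <| by
      simpa [zero_rpow (sub_pos.2 hp).ne'] using
        (continuousAt_rpow_const 0 (p - 1) (Or.inr (sub_pos.2 hp).le)).tendsto
  have hrpow : (fun t : ℝ => t ^ p) =o[𝓝[>] 0] fun t => t := by
    refine (isLittleO_of_tendsto' (eventually_mem_nhdsWithin.mono fun t ht h0 =>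
      absurd h0 (ne_of_gt ht)) ?_)
    refine hzero.congr' (eventually_mem_nhdsWithin.mono fun t ht => ?_)
    rw [rpow_sub_one (ne_of_gt ht)]
  exact hrpow.comp_tendsto tendsto_sub_one_nhdsGT

lemma pow_mul_fracHalf_comp_smul_sub (hn : 1 ≤ n) (hs : s ∈ Ioo (0 : ℝ) 1) {M : ℝ}
    (hM : ∀ x, |u x| ≤ M) (hL : LipschitzWith L u) {lam : ℝ} (hlam : 0 < lam) (x : En n) :
    lam ^ n * fracHalf n s u (lam ^ 2 • x) - fracHalf n s u x =
      lam ^ (n - 2 * s) * fracHalf n s (dilationIncrement (lam ^ 2) u) x +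
        (lam ^ (n - 2 * s) - 1) * fracHalf n s u x := by
  have hpow : lam ^ (n - 2 * s) * (lam ^ 2) ^ s = lam ^ n := by
    rw [← rpow_natCast lam 2, ← rpow_mul hlam.le, ← rpow_add hlam, ← rpow_natCast]
    norm_num
  rw [show fracHalf n s (dilationIncrement (lam ^ 2) u) x = _ from
    fracHalf_dilation_sub hn hs hM hL (by positivity) x, ← hpow]
  ring

lemma StrictStarConvex.lpNorm_fracHalf_dilationIncrement_isBigO (hn : 1 ≤ n)
    (hs : s ∈ Ioo (0 : ℝ) 1) (h : StrictStarConvex Ω) (hΩ : IsOpen Ω) (hb : IsBounded Ω)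
    (hu : ContDiffOn ℝ 2 u Ω) (hL : LipschitzWith L u) (hzero : ∀ x ∉ Ω, u x = 0)
    (hD2u : IntegrableOn (fun x => ‖hess n u x‖) Ω) :
    (fun lam : ℝ => lpNorm (fracHalf n s (dilationIncrement (lam ^ 2) u)) 2 volume) =O[𝓝[>] 1]
      fun lam => (lam - 1) ^ (1 - s / 2) := by
  obtain ⟨K, hK⟩ := h.exists_eLpNorm_fracHalf_dilationIncrement_le hn hs hΩ hb hu hL hzero hD2u
  have hsq : (fun lam : ℝ => lam ^ 2 - 1) =O[𝓝[>] 1] fun lam => lam - 1 := by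
    simpa using (isBigO_rpow_sub_one 2).mono nhdsWithin_le_nhds
  have hrate : (fun lam : ℝ => (lam ^ 2 - 1) ^ (1 - s / 2)) =O[𝓝[>] 1]
      fun lam => (lam - 1) ^ (1 - s / 2) :=
    hsq.rpow (by linarith [hs.2])
      (eventually_mem_nhdsWithin.mono fun lam hlam => (sub_pos.2 hlam).le)
  have hlt_two : ∀ᶠ lam : ℝ in 𝓝[>] 1, lam ^ 2 < 2 :=
    ((continuous_pow 2).continuousAt.eventually_lt_const (by norm_num)).filter_mono
      nhdsWithin_le_nhds
  refine IsBigO.trans (IsBigO.of_bound K ?_) hrate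
  filter_upwards [eventually_mem_nhdsWithin, hlt_two] with lam hlam hlam2
  have hκ : 1 < lam ^ 2 := one_lt_pow₀ hlam two_ne_zero
  have hrpow : 0 ≤ (lam ^ 2 - 1) ^ (1 - s / 2) := rpow_nonneg (sub_nonneg.2 hκ.le) _
  have hle := ENNReal.toReal_mono (by finiteness) (hK (lam ^ 2) ⟨hκ, hlam2.le⟩)
  have hmeas := stronglyMeasurable_fracHalf (n := n) (s := s)
    (lipschitzWith_dilationIncrement hL (lam ^ 2)).continuous
  rwa [norm_of_nonneg lpNorm_nonneg, norm_of_nonneg hrpow,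
    ← toReal_eLpNorm hmeas.aestronglyMeasurable, ← ENNReal.toReal_ofReal hrpow,
    ← ENNReal.coe_toReal, ← ENNReal.toReal_mul]

/-- The half-Laplacian of the dilation increment has `L²` norm `O((lam - 1) ^ (1 - s / 2))`, while
normalizing the dilation costs only `O(lam - 1)`. -/
lemma StrictStarConvex.lpNorm_dilation_fracHalf_isBigO (hn : 1 ≤ n)
    (hs : s ∈ Ioo (0 : ℝ) 1) (h : StrictStarConvex Ω) (hΩ : IsOpen Ω) (hb : IsBounded Ω)
    (hu : ContDiffOn ℝ 2 u Ω) (hL : LipschitzWith L u) (hzero : ∀ x ∉ Ω, u x = 0)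
    (hD2u : IntegrableOn (fun x => ‖hess n u x‖) Ω) :
    (fun lam : ℝ => lpNorm (fun x => lam ^ n * fracHalf n s u (lam ^ 2 • x) - fracHalf n s u x)
      2 volume) =O[𝓝[>] 1] fun lam => (lam - 1) ^ (1 - s / 2) := by
  have hsupp := hasCompactSupport_of_isBounded hb hzero
  obtain ⟨M, hM⟩ := hsupp.exists_bound_of_continuous hL.continuous
  set g := fracHalf n s u
  set W := fun lam : ℝ => fracHalf n s (dilationIncrement (lam ^ 2) u)
  set β := fun lam : ℝ => lam ^ (n - 2 * s)
  have hg : MemLp g 2 := memLp_two_fracHalf hn hs hL hsupp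
  have hβ : β =O[𝓝[>] 1] fun _ => (1 : ℝ) :=
    ((continuousAt_rpow_const 1 _ (Or.inl one_ne_zero)).tendsto.isBigO_one ℝ).mono
      nhdsWithin_le_nhds
  have hβ_sub : (fun lam => β lam - 1) =O[𝓝[>] 1] fun lam => (lam - 1) ^ (1 - s / 2) :=
    ((isBigO_rpow_sub_one _).mono nhdsWithin_le_nhds).trans
      (isBigO_sub_one_rpow_of_le_one (by linarith [hs.1]))
  have hW : (fun lam => lpNorm (W lam) 2 volume) =O[𝓝[>] 1] fun lam => (lam - 1) ^ (1 - s / 2) :=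
    h.lpNorm_fracHalf_dilationIncrement_isBigO hn hs hΩ hb hu hL hzero hD2u
  have hsum : (fun lam => ‖β lam‖ * lpNorm (W lam) 2 volume + lpNorm g 2 volume * ‖β lam - 1‖)
      =O[𝓝[>] 1] fun lam => (lam - 1) ^ (1 - s / 2) := by
    have hβW := hβ.norm_left.mul hW
    simp only [one_mul] at hβW
    exact hβW.add (hβ_sub.norm_left.const_mul_left _)
  refine IsBigO.trans (IsBigO.of_norm_eventuallyLE ?_) hsum
  filter_upwards [eventually_mem_nhdsWithin] with lam hlam
  have hdecomp : (fun x => lam ^ n * g (lam ^ 2 • x) - g x) =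
      β lam • W lam + (β lam - 1) • g :=
    funext (pow_mul_fracHalf_comp_smul_sub hn hs hM hL (one_pos.trans hlam))
  rw [norm_of_nonneg lpNorm_nonneg, hdecomp]
  refine (lpNorm_add_le' (hg.const_smul (β lam - 1)) one_le_two).trans_eq ?_
  rw [lpNorm_const_smul, lpNorm_const_smul, coe_nnnorm, coe_nnnorm, mul_comm (lpNorm g 2 volume)]

end Asymptotics

lemma C2Domain.StrictlyStarShapedAt.strictStarConvex {n : ℕ} {D : C2Domain n}
    (hD : D.StrictlyStarShapedAt 0) : StrictStarConvex D.carrier := by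
  obtain ⟨ρ, hρ, hball⟩ := hD.exists_starConvexBall
  exact hball.strictStarConvex hρ

lemma C2Domain.StrictlyStarShapedAt.integrableOn_norm_hess {n : ℕ} (hn : 1 ≤ n) {D : C2Domain n}
    (hD : D.StrictlyStarShapedAt 0) {s : ℝ} {u : En n → ℝ} (hu : ContDiffOn ℝ 2 u D.carrier)
    (hstar : StarCond n s D.carrier u) : IntegrableOn (fun x => ‖hess n u x‖) D.carrier := by
  obtain ⟨ρ, hρ, hball⟩ := hD.exists_starConvexBall
  exact hstar.integrableOn_norm_hess hn hρ hball D.isOpen_carrier D.bounded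
    (D.nonempty_frontier hn) hu

theorem pohozaev_step_C_general (n : ℕ) (hn : 1 ≤ n) (s : ℝ) (hs : s ∈ Ioo (0 : ℝ) 1)
    (Ω : Set (En n)) (hΩ : IsOpen Ω) (hb : IsBounded Ω) (h : StrictStarConvex Ω)
    (u : En n → ℝ) (hu : ContDiffOn ℝ 2 u Ω) {L : ℝ≥0} (hL : LipschitzWith L u)
    (hzero : ∀ x ∉ Ω, u x = 0) (hD2u : IntegrableOn (fun x => ‖hess n u x‖) Ω) :
    (fun lam => dilationPairing volume (fracHalf n s u) lam -
      dilationPairing volume (fracHalf n s u) 1) =O[𝓝[>] 1] fun lam => (lam - 1) ^ (2 - s) := by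
  have hg := memLp_two_fracHalf hn hs hL (hasCompactSupport_of_isBounded hb hzero)
  have hrate := (h.lpNorm_dilation_fracHalf_isBigO hn hs hΩ hb hu hL hzero hD2u).pow 2
  refine (hrate.const_mul_left (-(1 / 2))).congr' ?_ ?_ <;>
    filter_upwards [eventually_mem_nhdsWithin] with lam hlam
  · rw [dilationPairing_sub_dilationPairing_one volume hg (one_pos.trans hlam),
      finrank_euclideanSpace_fin]
  · rw [← rpow_mul_natCast (sub_nonneg.2 (le_of_lt hlam))]
    congr 1
    push_cast
    ring

/-- Step (C) in the proof of Theorem 2.4: for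
`Φ(λ) = ∫_{ℝⁿ} 𝔤(λx) 𝔤(x/λ) dx` with `𝔤 = (-Δ)^{s/2}u`, the one-sided derivative of
`Φ` at `λ = 1` vanishes. -/
theorem pohozaev_step_C (n : ℕ) (hn : 1 ≤ n) (s : ℝ) (hs : s ∈ Set.Ioo (0:ℝ) 1)
    (D : C2Domain n) (hD : D.StrictlyStarShapedAt 0)
    (u : En n → ℝ)
    (hu2 : ContDiffOn ℝ 2 u D.carrier)
    (hu1 : ContDiffOn ℝ 1 u (closure D.carrier))
    (hlip : ∃ L : ℝ≥0, LipschitzWith L u)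
    (hzero : ∀ x ∉ D.carrier, u x = 0)
    (hstar : StarCond n s D.carrier u) :
    Filter.Tendsto
      (fun lam : ℝ =>
        ((∫ x : En n, fracHalf n s u (lam • x) * fracHalf n s u (lam⁻¹ • x))
          - ∫ x : En n, fracHalf n s u ((1:ℝ) • x) * fracHalf n s u ((1:ℝ)⁻¹ • x))
          / (lam - 1))
      (nhdsWithin 1 (Set.Ioi 1)) (nhds 0) := by
  obtain ⟨L, hL⟩ := hlip
  have hrate := pohozaev_step_C_general n hn s hs D.carrier D.isOpen_carrier D.bounded
    hD.strictStarConvex u hu2 hL hzero (hD.integrableOn_norm_hess hn hu2 hstar)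
  exact (hrate.trans_isLittleO
    (isLittleO_sub_one_rpow (by linarith [hs.2]))).tendsto_div_nhds_zero
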